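/- Fix integers x_1 > x_2 > … > x_ℓ > 0 and positive integers r_1, …, r_ℓ. Let m_1 < … < m_e be the indices m ∈ {1,…,ℓ} for which r_1 + … + r_m is even, and let Z = {1} ∪ {2m_i, 2m_i+1 : 1 ≤ i ≤ e}. Then the following two sets of subgroups of the quotient group A/K coincide: the set {p(A_𝓛) : 𝓛 an even NCP of B_λ} and the set {H_σ : σ a Temperley–Lieb pattern of Z}. -/

import Mathlib

/-- `P` is a partition of the finite set `B ⊆ ℕ` into nonempty blocks. -/
def IsPartitionOf (B : Finset ℕ) (P : Finset (Finset ℕ)) : Prop :=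
  (∀ L ∈ P, L.Nonempty) ∧ (∀ L ∈ P, L ⊆ B) ∧ ∀ b ∈ B, ∃! L, L ∈ P ∧ b ∈ L

/-- The noncrossing condition on the blocks. -/
def PairwiseNoncrossing (P : Finset (Finset ℕ)) : Prop :=
  ∀ L ∈ P, ∀ L' ∈ P, L ≠ L' →
    ∀ a ∈ L, ∀ b ∈ L, ∀ c ∈ L', ∀ d ∈ L', a ≤ b → c ≤ d →
      Finset.Icc a b ∩ Finset.Icc c d = ∅ ∨
      Finset.Icc a b ⊆ Finset.Icc c d ∨ Finset.Icc c d ⊆ Finset.Icc a b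

/-- A noncrossing partition (NCP) of the finite set `B ⊆ ℕ`. -/
def IsNCP (B : Finset ℕ) (P : Finset (Finset ℕ)) : Prop :=
  IsPartitionOf B P ∧ PairwiseNoncrossing P

/-- `B_λ = {0, 2x₁, …, 2x_ℓ}` (indices `1, …, ℓ`). -/
def Blam (ℓ : ℕ) (x : ℕ → ℕ) : Finset ℕ :=
  insert 0 ((Finset.Icc 1 ℓ).image (fun i => 2 * x i))

/-- An even NCP of `B_λ`: an NCP such that every block `L` not containing `0`
has `r(L) = Σ_{j : 2x_j ∈ L} r_j` even. -/
def IsEvenNCP (ℓ : ℕ) (x r : ℕ → ℕ) (P : Finset (Finset ℕ)) : Prop :=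
  IsNCP (Blam ℓ x) P ∧
    ∀ L ∈ P, 0 ∉ L →
      Even (∑ j ∈ (Finset.Icc 1 ℓ).filter (fun j => 2 * x j ∈ L), r j)

/-- The standard generator `t_i` (for `1 ≤ i ≤ ℓ`) of `A = (ℤ/2)^ℓ`, written
additively; `t i = 0` for `i ∉ [1, ℓ]` (in particular `t (ℓ+1) = 1` is the identity). -/
def tgen (ℓ : ℕ) (i : ℕ) : Fin ℓ → ZMod 2 :=
  fun j => if (j : ℕ) + 1 = i then 1 else 0

/-- The subgroup `A_𝓛 ⊆ A` attached to an NCP `𝓛` of `B_λ` with `0 ∈ L₀`: generated by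
the `t_i + t_j` with `2x_i, 2x_j` in a common block not containing `0`, together with
the `t_i` with `2x_i` in the block containing `0`. -/
def ncpSubgroup (ℓ : ℕ) (x : ℕ → ℕ) (P : Finset (Finset ℕ)) :
    AddSubgroup (Fin ℓ → ZMod 2) :=
  AddSubgroup.closure
    ({a | ∃ L ∈ P, 0 ∉ L ∧ ∃ i ∈ Finset.Icc 1 ℓ, ∃ j ∈ Finset.Icc 1 ℓ,
        2 * x i ∈ L ∧ 2 * x j ∈ L ∧ a = tgen ℓ i + tgen ℓ j} ∪
     {a | ∃ L ∈ P, 0 ∈ L ∧ ∃ i ∈ Finset.Icc 1 ℓ, 2 * x i ∈ L ∧ a = tgen ℓ i})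

/-- The subgroup `K ⊆ A` generated by the `t_m + t_{m+1}` over the `1 ≤ m ≤ ℓ` with
`r₁ + … + r_m` odd (with `t_{ℓ+1}` the identity). -/
def Ksub (ℓ : ℕ) (r : ℕ → ℕ) : AddSubgroup (Fin ℓ → ZMod 2) :=
  AddSubgroup.closure
    {a | ∃ m ∈ Finset.Icc 1 ℓ, Odd (∑ j ∈ Finset.Icc 1 m, r j) ∧
        a = tgen ℓ m + tgen ℓ (m + 1)}

/-- A Temperley–Lieb pattern of `Z`. -/
def IsTLPattern (Z : Finset ℕ) (σ : Finset (Finset ℕ)) : Prop :=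
  IsPartitionOf Z σ ∧ PairwiseNoncrossing σ ∧
  ∃ M0 ∈ σ, ∃ d, Odd d ∧ M0 = ({d} : Finset ℕ) ∧
    ∀ M ∈ σ, M ≠ M0 → ∃ a b, a < b ∧ M = ({a, b} : Finset ℕ) ∧ (b < d ∨ d < a)

/-- For `b ∈ E`, the generator `t_{m}` for `m` the successor of `b` in `E`
(the identity `0` if `b` is the largest element of `E`). -/
def nextT (ℓ : ℕ) (E : Finset ℕ) (b : ℕ) : Fin ℓ → ZMod 2 :=
  if h : (E.filter (fun m => b < m)).Nonempty then
    tgen ℓ ((E.filter (fun m => b < m)).min' h)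
  else 0

/-- The generating set in `A` attached to a TL pattern `σ` of
`Z = {1} ∪ {2m_i, 2m_i + 1 : m_i ∈ E}`: for each block `{2m_{i₁}, 2m_{i₂-1}+1}` of σ
(`i₁ < i₂ ≤ e`) the element `t_{m_{i₁}} + t_{m_{i₂}}`, and for the block
`{2m_j, 2m_e+1}` (if present) the element `t_{m_j}`. -/
def tlGens (ℓ : ℕ) (E : Finset ℕ) (σ : Finset (Finset ℕ)) : Set (Fin ℓ → ZMod 2) :=
  {a | ∃ c ∈ E, ∃ d ∈ E, c ≤ d ∧ ({2 * c, 2 * d + 1} : Finset ℕ) ∈ σ ∧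
      a = tgen ℓ c + nextT ℓ E d}

/-! ### Auxiliary material -/

/-- The element of `B_λ` with index `i`, where index `ℓ+1` corresponds to `0`. -/
def yy (ℓ : ℕ) (x : ℕ → ℕ) (i : ℕ) : ℕ := if i ≤ ℓ then 2 * x i else 0

lemma tgen_last (ℓ : ℕ) : tgen ℓ (ℓ + 1) = 0 := by
  funext j
  have := j.2
  simp [tgen]
  omega

lemma add_self_A (ℓ : ℕ) (a : Fin ℓ → ZMod 2) : a + a = 0 := by
  funext j
  exact CharTwo.add_self_eq_zero (a j)

lemma rel_trans {ℓ : ℕ} {W : AddSubgroup (Fin ℓ → ZMod 2)} {a b c : Fin ℓ → ZMod 2}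
    (h1 : a + b ∈ W) (h2 : b + c ∈ W) : a + c ∈ W := by
  have h := W.add_mem h1 h2
  have e : a + b + (b + c) = a + c + (b + b) := by abel
  rw [e, add_self_A, add_zero] at h
  exact h

lemma rel_symm {ℓ : ℕ} {W : AddSubgroup (Fin ℓ → ZMod 2)} {a b : Fin ℓ → ZMod 2}
    (h1 : a + b ∈ W) : b + a ∈ W := by
  rw [add_comm]; exact h1

lemma ncp_rel {ℓ : ℕ} {x : ℕ → ℕ} {P : Finset (Finset ℕ)}
    (hxpos : ∀ i ∈ Finset.Icc 1 ℓ, 0 < x i)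
    {L : Finset ℕ} (hL : L ∈ P) {i j : ℕ} (hi : i ∈ Finset.Icc 1 (ℓ + 1))
    (hj : j ∈ Finset.Icc 1 (ℓ + 1)) (hiL : yy ℓ x i ∈ L) (hjL : yy ℓ x j ∈ L) :
    tgen ℓ i + tgen ℓ j ∈ ncpSubgroup ℓ x P := by
  rw [Finset.mem_Icc] at hi hj
  by_cases h0 : 0 ∈ L
  · have key : ∀ i, 1 ≤ i ∧ i ≤ ℓ + 1 → yy ℓ x i ∈ L → tgen ℓ i ∈ ncpSubgroup ℓ x P := by
      intro i hi hiL
      by_cases hl : i ≤ ℓ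
      · apply AddSubgroup.subset_closure
        right
        refine ⟨L, hL, h0, i, Finset.mem_Icc.2 ⟨hi.1, hl⟩, ?_, rfl⟩
        simpa [yy, hl] using hiL
      · have : i = ℓ + 1 := by omega
        rw [this, tgen_last]
        exact AddSubgroup.zero_mem _
    exact AddSubgroup.add_mem _ (key i hi hiL) (key j hj hjL)
  · have key : ∀ i, 1 ≤ i ∧ i ≤ ℓ + 1 → yy ℓ x i ∈ L → i ≤ ℓ ∧ 2 * x i ∈ L := by
      intro i hi hiL
      by_cases hl : i ≤ ℓ
      · exact ⟨hl, by simpa [yy, hl] using hiL⟩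
      · simp [yy, hl] at hiL
        exact absurd hiL h0
    obtain ⟨a1, a2⟩ := key i hi hiL
    obtain ⟨b1, b2⟩ := key j hj hjL
    apply AddSubgroup.subset_closure
    left
    exact ⟨L, hL, h0, i, Finset.mem_Icc.2 ⟨hi.1, a1⟩, j, Finset.mem_Icc.2 ⟨hj.1, b1⟩, a2, b2, rfl⟩

lemma ncp_le {ℓ : ℕ} {x : ℕ → ℕ} {P : Finset (Finset ℕ)} {W : AddSubgroup (Fin ℓ → ZMod 2)}
    (h : ∀ L ∈ P, ∀ i ∈ Finset.Icc 1 (ℓ + 1), ∀ j ∈ Finset.Icc 1 (ℓ + 1),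
      yy ℓ x i ∈ L → yy ℓ x j ∈ L → tgen ℓ i + tgen ℓ j ∈ W) :
    ncpSubgroup ℓ x P ≤ W := by
  unfold ncpSubgroup
  rw [AddSubgroup.closure_le]
  rintro a (⟨L, hL, h0, i, hi, j, hj, hiL, hjL, rfl⟩ | ⟨L, hL, h0, i, hi, hiL, rfl⟩)
  · rw [Finset.mem_Icc] at hi hj
    refine h L hL i (Finset.mem_Icc.2 (by omega)) j (Finset.mem_Icc.2 (by omega)) ?_ ?_
    · simpa [yy, hi.2] using hiL
    · simpa [yy, hj.2] using hjL
  · rw [Finset.mem_Icc] at hi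
    have := h L hL i (Finset.mem_Icc.2 (by omega)) (ℓ + 1) (Finset.mem_Icc.2 (by omega)) 
      (by simpa [yy, hi.2] using hiL) (by simpa [yy] using h0)
    rwa [tgen_last, add_zero] at this

lemma K_step {ℓ : ℕ} {r : ℕ → ℕ} {E : Finset ℕ}
    (hE : E = (Finset.Icc 1 ℓ).filter (fun m => Even (∑ j ∈ Finset.Icc 1 m, r j)))
    {i : ℕ} (h1 : 1 ≤ i) (h2 : i ≤ ℓ) (h3 : i ∉ E) :
    tgen ℓ i + tgen ℓ (i + 1) ∈ Ksub ℓ r := by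
  apply AddSubgroup.subset_closure
  refine ⟨i, Finset.mem_Icc.2 ⟨h1, h2⟩, ?_, rfl⟩
  rw [hE] at h3
  simp only [Finset.mem_filter, Finset.mem_Icc, not_and, Nat.not_even_iff_odd] at h3
  exact h3 ⟨h1, h2⟩

lemma K_run {ℓ : ℕ} {r : ℕ → ℕ} {E : Finset ℕ}
    (hE : E = (Finset.Icc 1 ℓ).filter (fun m => Even (∑ j ∈ Finset.Icc 1 m, r j)))
    {a : ℕ} (h1 : 1 ≤ a) (b : ℕ) (hab : a ≤ b) (h2 : b ≤ ℓ + 1)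
    (h3 : ∀ k, a ≤ k → k < b → k ∉ E) :
    tgen ℓ a + tgen ℓ b ∈ Ksub ℓ r := by
  induction b, hab using Nat.le_induction with
  | base => rw [add_self_A]; exact AddSubgroup.zero_mem _
  | succ n hn ih =>
    exact rel_trans (ih (by omega) (fun k hk hk' => h3 k hk (by omega)))
      (K_step hE (by omega) (by omega) (h3 n hn (by omega)))

lemma nextT_rel {ℓ : ℕ} {r : ℕ → ℕ} {E : Finset ℕ}
    (hE : E = (Finset.Icc 1 ℓ).filter (fun m => Even (∑ j ∈ Finset.Icc 1 m, r j)))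
    {d : ℕ} (hd : d ≤ ℓ) :
    tgen ℓ (d + 1) + nextT ℓ E d ∈ Ksub ℓ r := by
  unfold nextT
  split_ifs with h
  · set m := (E.filter (fun m => d < m)).min' h with hm
    have hmem := Finset.min'_mem _ h
    rw [← hm, Finset.mem_filter] at hmem
    have hmE := hmem.1
    rw [hE, Finset.mem_filter, Finset.mem_Icc] at hmE
    apply K_run hE (by omega) m (by omega) (by omega)
    intro k hk hk' hkE
    have := Finset.min'_le (E.filter (fun m => d < m)) k
      (Finset.mem_filter.2 ⟨hkE, by omega⟩)
    omega
  · rw [← tgen_last ℓ]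
    apply K_run hE (by omega) (ℓ + 1) (by omega) (by omega)
    intro k hk hk' hkE
    exact h ⟨k, Finset.mem_filter.2 ⟨hkE, by omega⟩⟩

lemma key_eq {ℓ : ℕ} {x r : ℕ → ℕ} {E : Finset ℕ}
    (hE : E = (Finset.Icc 1 ℓ).filter (fun m => Even (∑ j ∈ Finset.Icc 1 m, r j)))
    (R : ℕ → ℕ → Prop) (P σ : Finset (Finset ℕ))
    (hs : ∀ i j, R i j → R j i) (ht : ∀ i j k, R i j → R j k → R i k)
    (h1 : ∀ L ∈ P, ∀ i ∈ Finset.Icc 1 (ℓ + 1), ∀ j ∈ Finset.Icc 1 (ℓ + 1),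
      yy ℓ x i ∈ L → yy ℓ x j ∈ L → R i j)
    (h2 : ∀ i ∈ Finset.Icc 1 (ℓ + 1), ∀ j ∈ Finset.Icc 1 (ℓ + 1), R i j →
      tgen ℓ i + tgen ℓ j ∈ ncpSubgroup ℓ x P ⊔ Ksub ℓ r)
    (h3 : ∀ i ∈ Finset.Icc 1 ℓ, i ∉ E → R i (i + 1))
    (h4 : ∀ i ∈ E, ∀ j ∈ Finset.Icc 1 (ℓ + 1), i < j → R i j →
      ∃ d ∈ E, i ≤ d ∧ d + 1 ≤ j ∧ ({2 * i, 2 * d + 1} : Finset ℕ) ∈ σ)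
    (h5 : ∀ c ∈ E, ∀ d ∈ E, c ≤ d → ({2 * c, 2 * d + 1} : Finset ℕ) ∈ σ → R c (d + 1)) :
    AddSubgroup.map (QuotientAddGroup.mk' (Ksub ℓ r)) (ncpSubgroup ℓ x P) =
      AddSubgroup.closure (QuotientAddGroup.mk' (Ksub ℓ r) '' tlGens ℓ E σ) := by
  have hEm : ∀ c ∈ E, 1 ≤ c ∧ c ≤ ℓ := by
    intro c hc
    rw [hE, Finset.mem_filter, Finset.mem_Icc] at hc
    exact hc.1
  rw [← AddMonoidHom.map_closure, AddSubgroup.map_eq_map_iff, QuotientAddGroup.ker_mk']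
  set H := AddSubgroup.closure (tlGens ℓ E σ) with hH
  have hconn : ∀ n i j, j - i = n → 1 ≤ i → i ≤ j → j ≤ ℓ + 1 → R i j →
      tgen ℓ i + tgen ℓ j ∈ H ⊔ Ksub ℓ r := by
    intro n
    induction n using Nat.strong_induction_on with
    | _ n ih =>
      intro i j hn hi hij hj hR
      rcases Nat.eq_or_lt_of_le hij with rfl | hlt
      · rw [add_self_A]; exact AddSubgroup.zero_mem _
      · by_cases hiE : i ∈ E
        · obtain ⟨d, hd, hid, hdj, hσ⟩ := h4 i hiE j (Finset.mem_Icc.2 (by omega)) hlt hR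
          have hR' := h5 i hiE d hd hid hσ
          have e1 : tgen ℓ i + nextT ℓ E d ∈ H ⊔ Ksub ℓ r :=
            AddSubgroup.mem_sup_left (AddSubgroup.subset_closure ⟨i, hiE, d, hd, hid, hσ, rfl⟩)
          have e2 : tgen ℓ (d + 1) + nextT ℓ E d ∈ H ⊔ Ksub ℓ r :=
            AddSubgroup.mem_sup_right (nextT_rel hE (hEm d hd).2)
          exact rel_trans (rel_trans e1 (rel_symm e2))
            (ih (j - (d + 1)) (by omega) (d + 1) j rfl (by omega) hdj hj
              (ht _ _ _ (hs _ _ hR') hR))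
        · have hR' := h3 i (Finset.mem_Icc.2 (by omega)) hiE
          exact rel_trans (AddSubgroup.mem_sup_right (K_step hE hi (by omega) hiE))
            (ih (j - (i + 1)) (by omega) (i + 1) j rfl (by omega) (by omega) hj
              (ht _ _ _ (hs _ _ hR') hR))
  apply le_antisymm
  · refine sup_le (ncp_le ?_) le_sup_right
    intro L hL i hi j hj hiL hjL
    have hR := h1 L hL i hi j hj hiL hjL
    rw [Finset.mem_Icc] at hi hj
    rcases le_total i j with hij | hij
    · exact hconn _ i j rfl hi.1 hij hj.2 hR
    · exact rel_symm (hconn _ j i rfl hj.1 hij hi.2 (hs _ _ hR))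
  · refine sup_le ?_ le_sup_right
    rw [hH, AddSubgroup.closure_le]
    rintro a ⟨c, hc, d, hd, hcd, hσ, rfl⟩
    have hc' := hEm c hc
    have hd' := hEm d hd
    exact rel_trans (h2 c (Finset.mem_Icc.2 (by omega)) (d + 1) (Finset.mem_Icc.2 (by omega))
      (h5 c hc d hd hcd hσ)) (AddSubgroup.mem_sup_right (nextT_rel hE hd'.2))

lemma part_disj {B : Finset ℕ} {P : Finset (Finset ℕ)} (h : IsPartitionOf B P)
    {L L' : Finset ℕ} (hL : L ∈ P) (hL' : L' ∈ P) {a : ℕ} (ha : a ∈ L) (ha' : a ∈ L') :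
    L = L' :=
  (h.2.2 a (h.2.1 L hL ha)).unique ⟨hL, ha⟩ ⟨hL', ha'⟩

lemma nc_elim {P : Finset (Finset ℕ)} (h : PairwiseNoncrossing P)
    {L L' : Finset ℕ} (hL : L ∈ P) (hL' : L' ∈ P) (hne : L ≠ L') {a b c d : ℕ}
    (ha : a ∈ L) (hb : b ∈ L) (hc : c ∈ L') (hd : d ∈ L') (h1 : a < c) (h2 : c < b)
    (h3 : b < d) : False := by
  rcases h L hL L' hL' hne a ha b hb c hc d hd (by omega) (by omega) with h | h | h
  · have : c ∈ Finset.Icc a b ∩ Finset.Icc c d := by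
      simp only [Finset.mem_inter, Finset.mem_Icc]; omega
    rw [h] at this
    simp at this
  · have := h (Finset.mem_Icc.2 ⟨le_refl a, by omega⟩)
    rw [Finset.mem_Icc] at this
    omega
  · have := h (Finset.mem_Icc.2 ⟨by omega, le_refl d⟩)
    rw [Finset.mem_Icc] at this
    omega

lemma nc_intro {B : Finset ℕ} {P : Finset (Finset ℕ)} (hp : IsPartitionOf B P)
    (h : ∀ L ∈ P, ∀ L' ∈ P, L ≠ L' → ∀ a ∈ L, ∀ b ∈ L, ∀ c ∈ L', ∀ d ∈ L',
      a < c → c < b → b < d → False) : PairwiseNoncrossing P := by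
  intro L hL L' hL' hne a ha b hb c hc d hd hab hcd
  have n1 : ∀ u ∈ L, ∀ v ∈ L', u ≠ v := by
    rintro u hu v hv rfl
    exact hne (part_disj hp hL hL' hu hv)
  have := n1 a ha c hc
  have := n1 a ha d hd
  have := n1 b hb c hc
  have := n1 b hb d hd
  have g1 : ¬ (a < c ∧ c < b ∧ b < d) := fun g =>
    h L hL L' hL' hne a ha b hb c hc d hd g.1 g.2.1 g.2.2
  have g2 : ¬ (c < a ∧ a < d ∧ d < b) := fun g =>
    h L' hL' L hL hne.symm c hc d hd a ha b hb g.1 g.2.1 g.2.2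
  by_cases c1 : b < c
  · left
    ext z
    simp only [Finset.mem_inter, Finset.mem_Icc, Finset.notMem_empty, iff_false]
    omega
  by_cases c2 : d < a
  · left
    ext z
    simp only [Finset.mem_inter, Finset.mem_Icc, Finset.notMem_empty, iff_false]
    omega
  right
  by_cases c3 : a < c
  · right
    apply Finset.Icc_subset_Icc <;> omega
  · left
    apply Finset.Icc_subset_Icc <;> omega

/-! ### From TL patterns to NCPs -/

lemma tl_parity {E Z : Finset ℕ}
    (hZ : Z = insert 1 (E.biUnion (fun m => ({2 * m, 2 * m + 1} : Finset ℕ))))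
    {σ : Finset (Finset ℕ)} (hσ : IsTLPattern Z σ) {i j : ℕ} (hij : i < j)
    (hi : i ∈ E) (hM : ({2 * i, 2 * j} : Finset ℕ) ∈ σ) : False := by
  obtain ⟨hp, hnc, M0, hM0, d, hd, rfl, hpair⟩ := hσ
  have hZm : ∀ z, z ∈ Z ↔ z = 1 ∨ ∃ m ∈ E, z = 2 * m ∨ z = 2 * m + 1 := by
    intro z; rw [hZ]; simp
  set Q := Z.filter (fun z => 2 * i < z ∧ z < 2 * j) with hQ
  have hne0 : ({2 * i, 2 * j} : Finset ℕ) ≠ {d} := by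
    intro h
    have h1 : 2 * i ∈ ({d} : Finset ℕ) := by rw [← h]; simp
    have h2 : 2 * j ∈ ({d} : Finset ℕ) := by rw [← h]; simp
    simp at h1 h2
    omega
  have hdout : 2 * j < d ∨ d < 2 * i := by
    obtain ⟨a, b, hab, he, h⟩ := hpair _ hM hne0
    have h1 : 2 * i ∈ ({a, b} : Finset ℕ) := by rw [← he]; simp
    have h2 : 2 * j ∈ ({a, b} : Finset ℕ) := by rw [← he]; simp
    simp at h1 h2
    omega
  have hev : Even Q.card := by
    have hcov : Q = (σ.filter (fun M => M ⊆ Q)).biUnion id := by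
      ext z
      simp only [Finset.mem_biUnion, Finset.mem_filter, id]
      constructor
      · intro hz
        have hz' := hz
        rw [hQ, Finset.mem_filter] at hz'
        obtain ⟨hzZ, hz1, hz2⟩ := hz'
        obtain ⟨M, ⟨hMσ, hzM⟩, -⟩ := hp.2.2 z hzZ
        refine ⟨M, ⟨hMσ, ?_⟩, hzM⟩
        intro w hw
        have hneM : M ≠ {2 * i, 2 * j} := by
          rintro rfl
          simp at hzM
          omega
        have hw1 : w ≠ 2 * i := by
          rintro rfl
          exact hneM (part_disj hp hMσ hM hw (by simp))
        have hw2 : w ≠ 2 * j := by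
          rintro rfl
          exact hneM (part_disj hp hMσ hM hw (by simp))
        rw [hQ, Finset.mem_filter]
        refine ⟨hp.2.1 M hMσ hw, ?_⟩
        constructor
        · by_contra hlt
          exact nc_elim hnc hMσ hM hneM hw hzM (c := 2 * i) (d := 2 * j) (by simp) (by simp)
            (by omega) (by omega) (by omega)
        · by_contra hlt
          exact nc_elim hnc hM hMσ hneM.symm (a := 2 * i) (b := 2 * j) (by simp) (by simp) hzM hw
            (by omega) (by omega) (by omega)
      · rintro ⟨M, ⟨-, hMQ⟩, hzM⟩
        exact hMQ hzM
    rw [hcov, Finset.card_biUnion]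
    · apply Finset.even_sum
      intro M hMf
      rw [Finset.mem_filter] at hMf
      have hMne : M ≠ {d} := by
        rintro rfl
        have := hMf.2 (Finset.mem_singleton_self d)
        rw [hQ, Finset.mem_filter] at this
        omega
      obtain ⟨a, b, hab, rfl, -⟩ := hpair M hMf.1 hMne
      simp only [id]
      rw [Finset.card_pair (by omega)]
      exact even_two
    · intro M hM1 M' hM2 hne
      rw [Finset.mem_coe, Finset.mem_filter] at hM1 hM2
      simp only [id, Function.onFun]
      rw [Finset.disjoint_left]
      intro z hz hz'
      exact hne (part_disj hp hM1.1 hM2.1 hz hz')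
  have hodd : Odd Q.card := by
    have hQ2 : Q = (E.filter (fun m => i < m ∧ m < j)).image (fun m => 2 * m) ∪
        (E.filter (fun m => i ≤ m ∧ m < j)).image (fun m => 2 * m + 1) := by
      ext z
      simp only [hQ, Finset.mem_filter, Finset.mem_union, Finset.mem_image, hZm]
      constructor
      · rintro ⟨(rfl | ⟨m, hm, rfl | rfl⟩), hz1, hz2⟩
        · have : i = 0 := by omega
          right
          exact ⟨i, ⟨hi, by omega⟩, by omega⟩
        · left
          exact ⟨m, ⟨hm, by omega⟩, rfl⟩
        · right
          exact ⟨m, ⟨hm, by omega⟩, rfl⟩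
      · rintro (⟨m, ⟨hm, h1⟩, rfl⟩ | ⟨m, ⟨hm, h1⟩, rfl⟩)
        · exact ⟨Or.inr ⟨m, hm, Or.inl rfl⟩, by omega⟩
        · exact ⟨Or.inr ⟨m, hm, Or.inr rfl⟩, by omega⟩
    have hins : E.filter (fun m => i ≤ m ∧ m < j) =
        insert i (E.filter (fun m => i < m ∧ m < j)) := by
      ext m
      simp only [Finset.mem_filter, Finset.mem_insert]
      constructor
      · rintro ⟨h1, h2, h3⟩
        by_cases h : m = i
        · exact Or.inl h
        · exact Or.inr ⟨h1, by omega⟩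
      · rintro (rfl | ⟨h1, h2⟩)
        · exact ⟨hi, by omega⟩
        · exact ⟨h1, by omega⟩
    rw [hQ2, Finset.card_union_of_disjoint, Finset.card_image_of_injective,
      Finset.card_image_of_injective, hins, Finset.card_insert_of_notMem]
    · exact ⟨(E.filter (fun m => i < m ∧ m < j)).card, by ring⟩
    · simp
    · intro u v h; simp at h; exact h
    · intro u v h; simp at h; exact h
    · rw [Finset.disjoint_left]
      intro z hz hz'
      simp only [Finset.mem_image] at hz hz'
      obtain ⟨u, -, rfl⟩ := hz
      obtain ⟨v, -, h⟩ := hz'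
      omega
  exact (Nat.not_even_iff_odd.2 hodd) hev

lemma even_of_saturated {ℓ : ℕ} {r : ℕ → ℕ} {E : Finset ℕ}
    (hE : E = (Finset.Icc 1 ℓ).filter (fun m => Even (∑ j ∈ Finset.Icc 1 m, r j)))
    (S : ℕ → Prop) [DecidablePred S] (h1 : ∀ i ∈ Finset.Icc 1 ℓ, i ∉ E → (S i ↔ S (i + 1)))
    (h2 : ¬ S (ℓ + 1)) : Even (∑ j ∈ (Finset.Icc 1 ℓ).filter S, r j) := by
  have hmain : ∀ m ≤ ℓ, Even (∑ j ∈ (Finset.Icc 1 m).filter S, r j) ↔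
      (¬ S m ∨ Even (∑ j ∈ Finset.Icc 1 m, r j)) := by
    intro m
    induction m with
    | zero => intro _; simp
    | succ n ih =>
      intro hn
      have ih' := ih (by omega)
      have hs : ∑ j ∈ (Finset.Icc 1 (n + 1)).filter S, r j =
          ∑ j ∈ (Finset.Icc 1 n).filter S, r j + if S (n + 1) then r (n + 1) else 0 := by
        rw [Finset.sum_filter, Finset.sum_filter, Finset.sum_Icc_succ_top (by omega)]
      have hs' : ∑ j ∈ Finset.Icc 1 (n + 1), r j = ∑ j ∈ Finset.Icc 1 n, r j + r (n + 1) :=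
        Finset.sum_Icc_succ_top (by omega) _
      rw [hs, hs']
      have hn1 : Even (∑ j ∈ Finset.Icc 1 n, r j) ∨ (S n ↔ S (n + 1)) := by
        by_cases h0 : n = 0
        · left; subst h0; simp
        by_cases hnE : n ∈ E
        · left
          rw [hE, Finset.mem_filter] at hnE
          exact hnE.2
        · right
          exact h1 n (Finset.mem_Icc.2 (by omega)) hnE
      by_cases hS : S (n + 1)
      · simp only [hS, if_true, Nat.even_add, not_true, false_or]
        rw [ih']
        tauto
      · simp only [hS, if_false, add_zero, not_false_iff, true_or, iff_true]
        rw [ih']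
        tauto
  rw [hmain ℓ le_rfl]
  by_cases h0 : ℓ = 0
  · right; subst h0; simp
  by_cases hl : ℓ ∈ E
  · right
    rw [hE, Finset.mem_filter] at hl
    exact hl.2
  · left
    rw [h1 ℓ (Finset.mem_Icc.2 (by omega)) hl]
    exact h2

lemma yy_anti {ℓ : ℕ} {x : ℕ → ℕ}
    (hx : ∀ i ∈ Finset.Icc 1 ℓ, ∀ j ∈ Finset.Icc 1 ℓ, i < j → x j < x i)
    (hxpos : ∀ i ∈ Finset.Icc 1 ℓ, 0 < x i) {i j : ℕ} (hi : 1 ≤ i) (hij : i < j)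
    (hj : j ≤ ℓ + 1) : yy ℓ x j < yy ℓ x i := by
  have h1 : i ≤ ℓ := by omega
  by_cases h2 : j ≤ ℓ
  · simp only [yy, h1, h2, if_true]
    have := hx i (Finset.mem_Icc.2 (by omega)) j (Finset.mem_Icc.2 (by omega)) hij
    omega
  · simp only [yy, h1, h2, if_true, if_false]
    have := hxpos i (Finset.mem_Icc.2 (by omega))
    omega

lemma yy_lt {ℓ : ℕ} {x : ℕ → ℕ}
    (hx : ∀ i ∈ Finset.Icc 1 ℓ, ∀ j ∈ Finset.Icc 1 ℓ, i < j → x j < x i)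
    (hxpos : ∀ i ∈ Finset.Icc 1 ℓ, 0 < x i) {i j : ℕ} (hi : i ∈ Finset.Icc 1 (ℓ + 1))
    (hj : j ∈ Finset.Icc 1 (ℓ + 1)) (h : yy ℓ x j < yy ℓ x i) : i < j := by
  rw [Finset.mem_Icc] at hi hj
  by_contra hc
  rcases Nat.eq_or_lt_of_le (not_lt.1 hc) with rfl | hlt
  · omega
  · have := yy_anti hx hxpos hj.1 hlt hi.2
    omega

lemma yy_inj {ℓ : ℕ} {x : ℕ → ℕ}
    (hx : ∀ i ∈ Finset.Icc 1 ℓ, ∀ j ∈ Finset.Icc 1 ℓ, i < j → x j < x i)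
    (hxpos : ∀ i ∈ Finset.Icc 1 ℓ, 0 < x i) {i j : ℕ} (hi : i ∈ Finset.Icc 1 (ℓ + 1))
    (hj : j ∈ Finset.Icc 1 (ℓ + 1)) (h : yy ℓ x i = yy ℓ x j) : i = j := by
  rw [Finset.mem_Icc] at hi hj
  rcases lt_trichotomy i j with hlt | rfl | hlt
  · have := yy_anti hx hxpos hi.1 hlt hj.2
    omega
  · rfl
  · have := yy_anti hx hxpos hj.1 hlt hi.2
    omega

lemma mem_Blam {ℓ : ℕ} {x : ℕ → ℕ} {b : ℕ} :
    b ∈ Blam ℓ x ↔ ∃ i ∈ Finset.Icc 1 (ℓ + 1), b = yy ℓ x i := by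
  simp only [Blam, Finset.mem_insert, Finset.mem_image, Finset.mem_Icc]
  constructor
  · rintro (rfl | ⟨i, hi, rfl⟩)
    · exact ⟨ℓ + 1, by omega, by simp [yy]⟩
    · exact ⟨i, by omega, by simp [yy, hi.2]⟩
  · rintro ⟨i, hi, rfl⟩
    by_cases h : i ≤ ℓ
    · right
      exact ⟨i, by omega, by simp [yy, h]⟩
    · left
      simp [yy, h]

lemma ncp_of_tl {ℓ : ℕ} {x r : ℕ → ℕ}
    (hx : ∀ i ∈ Finset.Icc 1 ℓ, ∀ j ∈ Finset.Icc 1 ℓ, i < j → x j < x i)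
    (hxpos : ∀ i ∈ Finset.Icc 1 ℓ, 0 < x i)
    {E : Finset ℕ}
    (hE : E = (Finset.Icc 1 ℓ).filter (fun m => Even (∑ j ∈ Finset.Icc 1 m, r j)))
    {Z : Finset ℕ}
    (hZ : Z = insert 1 (E.biUnion (fun m => ({2 * m, 2 * m + 1} : Finset ℕ))))
    {σ : Finset (Finset ℕ)} (hσ : IsTLPattern Z σ) :
    ∃ P, IsEvenNCP ℓ x r P ∧
      AddSubgroup.map (QuotientAddGroup.mk' (Ksub ℓ r)) (ncpSubgroup ℓ x P) =
      AddSubgroup.closure (QuotientAddGroup.mk' (Ksub ℓ r) '' tlGens ℓ E σ) := by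
  classical
  have hσ' := hσ
  obtain ⟨hp, hnc, M0, hM0, d0, hd0, rfl, hpair⟩ := hσ'
  have hEm : ∀ c ∈ E, 1 ≤ c ∧ c ≤ ℓ := by
    intro c hc
    rw [hE, Finset.mem_filter, Finset.mem_Icc] at hc
    exact hc.1
  have hZm : ∀ z, z ∈ Z ↔ z = 1 ∨ ∃ m ∈ E, z = 2 * m ∨ z = 2 * m + 1 := by
    intro z; rw [hZ]; simp
  let R : ℕ → ℕ → Prop := fun i j =>
    ∀ M ∈ σ, ∀ a ∈ M, ∀ b ∈ M, ((a < 2 * i ∧ 2 * i ≤ b) ↔ (a < 2 * j ∧ 2 * j ≤ b))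
  have hrefl : ∀ i, R i i := fun i M _ a _ b _ => Iff.rfl
  have hs : ∀ i j, R i j → R j i := fun i j h M hM a ha b hb => (h M hM a ha b hb).symm
  have ht : ∀ i j k, R i j → R j k → R i k := fun i j k h h' M hM a ha b hb =>
    (h M hM a ha b hb).trans (h' M hM a ha b hb)
  have hRnc : ∀ i j k l, i < j → j < k → k < l → R i k → R j l → R i j := by
    intro i j k l h1 h2 h3 h4 h5 M hM a ha b hb
    have := h4 M hM a ha b hb
    have := h5 M hM a ha b hb
    omega
  have h3 : ∀ i ∈ Finset.Icc 1 ℓ, i ∉ E → R i (i + 1) := by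
    intro i hi hiE M hM a ha b hb
    rw [Finset.mem_Icc] at hi
    have hn : ∀ z ∈ M, z ≠ 2 * i ∧ z ≠ 2 * i + 1 := by
      intro z hz
      rcases (hZm z).1 (hp.2.1 M hM hz) with rfl | ⟨m, hm, h⟩
      · omega
      · have : m ≠ i := by rintro rfl; exact hiE hm
        omega
    have := hn a ha
    have := hn b hb
    omega
  have h5 : ∀ c ∈ E, ∀ d ∈ E, c ≤ d → ({2 * c, 2 * d + 1} : Finset ℕ) ∈ σ → R c (d + 1) := by
    intro c hc d hd hcd hM M' hM' a ha b hb
    by_cases he : M' = {2 * c, 2 * d + 1}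
    · subst he
      simp at ha hb
      omega
    · have hn : ∀ z ∈ M', z ≠ 2 * c ∧ z ≠ 2 * d + 1 := by
        intro z hz
        constructor
        · rintro rfl
          exact he (part_disj hp hM' hM hz (by simp))
        · rintro rfl
          exact he (part_disj hp hM' hM hz (by simp))
      have := hn a ha
      have := hn b hb
      have g1 : ¬ (a < 2 * c ∧ 2 * c < b ∧ b < 2 * d + 1) := fun g =>
        nc_elim hnc hM' hM he ha hb (by simp) (by simp) g.1 g.2.1 g.2.2
      have g2 : ¬ (2 * c < a ∧ a < 2 * d + 1 ∧ 2 * d + 1 < b) := fun g =>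
        nc_elim hnc hM hM' (Ne.symm he) (by simp) (by simp) ha hb g.1 g.2.1 g.2.2
      omega
  have h4 : ∀ i ∈ E, ∀ j ∈ Finset.Icc 1 (ℓ + 1), i < j → R i j →
      ∃ d ∈ E, i ≤ d ∧ d + 1 ≤ j ∧ ({2 * i, 2 * d + 1} : Finset ℕ) ∈ σ := by
    intro i hi j hj hij hR
    obtain ⟨M, ⟨hM, hiM⟩, -⟩ := hp.2.2 (2 * i) ((hZm _).2 (Or.inr ⟨i, hi, Or.inl rfl⟩))
    have hne : M ≠ {d0} := by
      rintro rfl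
      simp at hiM
      obtain ⟨k, hk⟩ := hd0
      omega
    obtain ⟨a, b, hab, rfl, -⟩ := hpair M hM hne
    have hsep := hR _ hM a (by simp) b (by simp)
    have hi1 := hEm i hi
    simp only [Finset.mem_insert, Finset.mem_singleton] at hiM
    rcases hiM with h | h
    · subst h
      rcases (hZm b).1 (hp.2.1 _ hM (by simp)) with rfl | ⟨m, hm, rfl | rfl⟩
      · omega
      · exact (tl_parity hZ hσ (by omega) hi hM).elim
      · exact ⟨m, hm, by omega, by omega, hM⟩
    · omega
  let blk : ℕ → Finset ℕ := fun i => ((Finset.Icc 1 (ℓ + 1)).filter (R i)).image (yy ℓ x)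
  have hblk : ∀ i, ∀ j ∈ Finset.Icc 1 (ℓ + 1), (yy ℓ x j ∈ blk i ↔ R i j) := by
    intro i j hj
    simp only [blk, Finset.mem_image, Finset.mem_filter]
    constructor
    · rintro ⟨k, ⟨hk, hR⟩, h⟩
      rw [← yy_inj hx hxpos hk hj h]
      exact hR
    · intro h
      exact ⟨j, ⟨hj, h⟩, rfl⟩
  have hblk' : ∀ i, ∀ z ∈ blk i, ∃ j ∈ Finset.Icc 1 (ℓ + 1), z = yy ℓ x j ∧ R i j := by
    intro i z hz
    simp only [blk, Finset.mem_image, Finset.mem_filter] at hz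
    obtain ⟨j, ⟨hj, hR⟩, rfl⟩ := hz
    exact ⟨j, hj, rfl, hR⟩
  have hblkeq : ∀ i j, R i j → blk i = blk j := by
    intro i j h
    have : (Finset.Icc 1 (ℓ + 1)).filter (R i) = (Finset.Icc 1 (ℓ + 1)).filter (R j) := by
      apply Finset.filter_congr
      intro k _
      exact ⟨fun h' => ht _ _ _ (hs _ _ h) h', fun h' => ht _ _ _ h h'⟩
    simp only [blk, this]
  let P : Finset (Finset ℕ) := (Finset.Icc 1 (ℓ + 1)).image blk
  have hPm : ∀ L ∈ P, ∃ i ∈ Finset.Icc 1 (ℓ + 1), L = blk i := by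
    intro L hL
    simp only [P, Finset.mem_image] at hL
    obtain ⟨i, hi, rfl⟩ := hL
    exact ⟨i, hi, rfl⟩
  have hPpart : IsPartitionOf (Blam ℓ x) P := by
    refine ⟨?_, ?_, ?_⟩
    · intro L hL
      obtain ⟨i, hi, rfl⟩ := hPm L hL
      exact ⟨yy ℓ x i, (hblk i i hi).2 (hrefl i)⟩
    · intro L hL z hz
      obtain ⟨i, hi, rfl⟩ := hPm L hL
      obtain ⟨j, hj, rfl, -⟩ := hblk' i z hz
      exact mem_Blam.2 ⟨j, hj, rfl⟩
    · intro b hb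
      obtain ⟨i, hi, rfl⟩ := mem_Blam.1 hb
      refine ⟨blk i, ⟨Finset.mem_image_of_mem _ hi, (hblk i i hi).2 (hrefl i)⟩, ?_⟩
      rintro L ⟨hL, hbL⟩
      obtain ⟨j, hj, rfl⟩ := hPm L hL
      exact hblkeq _ _ ((hblk j i hi).1 hbL)
  have h1 : ∀ L ∈ P, ∀ i ∈ Finset.Icc 1 (ℓ + 1), ∀ j ∈ Finset.Icc 1 (ℓ + 1),
      yy ℓ x i ∈ L → yy ℓ x j ∈ L → R i j := by
    intro L hL i hi j hj hiL hjL
    obtain ⟨k, hk, rfl⟩ := hPm L hL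
    exact ht _ _ _ (hs _ _ ((hblk k i hi).1 hiL)) ((hblk k j hj).1 hjL)
  refine ⟨P, ⟨⟨hPpart, nc_intro hPpart ?_⟩, ?_⟩, ?_⟩
  · intro L hL L' hL' hne a ha b hb c hc d hd hac hcb hbd
    obtain ⟨i, hi, rfl⟩ := hPm L hL
    obtain ⟨i', hi', rfl⟩ := hPm L' hL'
    obtain ⟨a, ha', rfl, hRa⟩ := hblk' i a ha
    obtain ⟨b, hb', rfl, hRb⟩ := hblk' i b hb
    obtain ⟨c, hc', rfl, hRc⟩ := hblk' i' c hc
    obtain ⟨d, hd', rfl, hRd⟩ := hblk' i' d hd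
    have e1 := yy_lt hx hxpos hc' ha' hac
    have e2 := yy_lt hx hxpos hb' hc' hcb
    have e3 := yy_lt hx hxpos hd' hb' hbd
    have := hRnc d b c a e3 e2 e1 (ht _ _ _ (hs _ _ hRd) hRc) (ht _ _ _ (hs _ _ hRb) hRa)
    exact hne (hblkeq _ _ (ht _ _ _ hRb (ht _ _ _ (hs _ _ this) (hs _ _ hRd))))
  · intro L hL h0
    obtain ⟨i, hi, rfl⟩ := hPm L hL
    have hf : (Finset.Icc 1 ℓ).filter (fun j => 2 * x j ∈ blk i) =
        (Finset.Icc 1 ℓ).filter (fun j => R i j) := by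
      apply Finset.filter_congr
      intro j hj
      rw [Finset.mem_Icc] at hj
      rw [← hblk i j (Finset.mem_Icc.2 (by omega))]
      simp [yy, hj.2]
    rw [hf]
    apply even_of_saturated hE
    · intro j hj hjE
      have := h3 j hj hjE
      exact ⟨fun h => ht _ _ _ h this, fun h => ht _ _ _ h (hs _ _ this)⟩
    · rw [← hblk i (ℓ + 1) (Finset.mem_Icc.2 (by omega))]
      simpa [yy] using h0
  · refine key_eq hE R P σ hs ht h1 ?_ h3 h4 h5
    intro i hi j hj hR
    apply AddSubgroup.mem_sup_left
    exact ncp_rel hxpos (L := blk i) (Finset.mem_image_of_mem _ hi) hi hj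
      ((hblk i i hi).2 (hrefl i)) ((hblk i j hj).2 hR)

/-! ### From NCPs to TL patterns -/

lemma merge_nc (R : ℕ → ℕ → Prop) (hr : ∀ i, R i i) (hs : ∀ i j, R i j → R j i)
    (ht : ∀ i j k, R i j → R j k → R i k)
    (hnc : ∀ i j k l, i < j → j < k → k < l → R i k → R j l → R i j) (m : ℕ) :
    ∃ R' : ℕ → ℕ → Prop, (∀ i, R' i i) ∧ (∀ i j, R' i j → R' j i) ∧
      (∀ i j k, R' i j → R' j k → R' i k) ∧
      (∀ i j k l, i < j → j < k → k < l → R' i k → R' j l → R' i j) ∧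
      R' m (m + 1) ∧ (∀ i j, R i j → R' i j) ∧
      (∀ i j, R' i j → R i j ∨ (R i m ∧ R (m + 1) j) ∨ (R i (m + 1) ∧ R m j)) := by
  refine ⟨fun i j => R i j ∨ (R i m ∧ R (m + 1) j) ∨ (R i (m + 1) ∧ R m j),
    ?_, ?_, ?_, ?_, ?_, ?_, ?_⟩
  · intro i; exact Or.inl (hr i)
  · rintro i j (h | ⟨h, h'⟩ | ⟨h, h'⟩)
    · exact Or.inl (hs _ _ h)
    · exact Or.inr (Or.inr ⟨hs _ _ h', hs _ _ h⟩)
    · exact Or.inr (Or.inl ⟨hs _ _ h', hs _ _ h⟩)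
  · intro i j k h h'
    grind
  · -- a path between the merged classes cannot cross another class
    have hcomm : ∀ u v w, u < v → v < w → ∀ s, (s < u ∨ w < s) → R u w → R v s → R u v := by
      intro u v w h1 h2 s h3 h4 h5
      rcases h3 with h3 | h3
      · have := hnc s u v w h3 h1 h2 (hs _ _ h5) h4
        exact ht _ _ _ (hs _ _ this) (hs _ _ h5)
      · exact hnc u v w s h1 h2 h3 h4 h5
    have main : ∀ i j k l, i < j → j < k → k < l → 
        ((R i m ∧ R (m + 1) k) ∨ (R i (m + 1) ∧ R m k)) → R j l →
        (R j m ∨ R j (m + 1)) := by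
      intro i j k l h1 h2 h3 h4 h5
      by_contra hcon
      push Not at hcon
      obtain ⟨c1, c2⟩ := hcon
      have nj : ∀ z, (R m z ∨ R (m + 1) z) → z ≠ j ∧ z ≠ l := by
        intro z hz
        constructor <;> rintro rfl <;> grind
      have nm := nj m (Or.inl (hr _))
      have nm1 := nj (m + 1) (Or.inr (hr _))
      have hins : ∀ u v, (j < u ∧ u < l) → (v < j ∨ l < v) → R u v → (R m u ∨ R (m + 1) u) →
          False := by
        intro u v hu hv huv hmu
        have := hcomm j u l hu.1 hu.2 v hv h5 huv
        grind
      have hmm : (j < m ∧ m < l) ↔ (j < m + 1 ∧ m + 1 < l) := by omega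
      by_cases hin : j < m ∧ m < l
      · rcases h4 with ⟨h4, h4'⟩ | ⟨h4, h4'⟩
        · exact hins m i hin (by omega) (hs _ _ h4) (Or.inl (hr _))
        · exact hins (m + 1) i (hmm.1 hin) (by omega) (hs _ _ h4) (Or.inr (hr _))
      · rcases h4 with ⟨h4, h4'⟩ | ⟨h4, h4'⟩
        · exact hins k (m + 1) ⟨h2, h3⟩ (by omega) (hs _ _ h4') (Or.inr h4')
        · exact hins k m ⟨h2, h3⟩ (by omega) (hs _ _ h4') (Or.inl h4')
    have main' : ∀ i j k l, i < j → j < k → k < l → R i k →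
        ((R j m ∧ R (m + 1) l) ∨ (R j (m + 1) ∧ R m l)) → 
        (R i m ∨ R i (m + 1)) := by
      intro i j k l h1 h2 h3 h5 h4
      by_contra hcon
      push Not at hcon
      obtain ⟨c1, c2⟩ := hcon
      have nj : ∀ z, (R m z ∨ R (m + 1) z) → z ≠ i ∧ z ≠ k := by
        intro z hz
        constructor <;> rintro rfl <;> grind
      have nm := nj m (Or.inl (hr _))
      have nm1 := nj (m + 1) (Or.inr (hr _))
      have hins : ∀ u v, (i < u ∧ u < k) → (v < i ∨ k < v) → R u v → (R m u ∨ R (m + 1) u) →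
          False := by
        intro u v hu hv huv hmu
        have := hcomm i u k hu.1 hu.2 v hv h5 huv
        grind
      have hmm : (i < m ∧ m < k) ↔ (i < m + 1 ∧ m + 1 < k) := by omega
      by_cases hin : i < m ∧ m < k
      · rcases h4 with ⟨h4, h4'⟩ | ⟨h4, h4'⟩
        · exact hins (m + 1) l (hmm.1 hin) (by omega) h4' (Or.inr (hr _))
        · exact hins m l hin (by omega) h4' (Or.inl (hr _))
      · rcases h4 with ⟨h4, h4'⟩ | ⟨h4, h4'⟩
        · exact hins j m ⟨h1, h2⟩ (by omega) h4 (Or.inl (hs _ _ h4))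
        · exact hins j (m + 1) ⟨h1, h2⟩ (by omega) h4 (Or.inr (hs _ _ h4))
    intro i j k l h1 h2 h3 h4 h5
    rcases h4 with h4 | h4 <;> rcases h5 with h5 | h5
    · exact Or.inl (hnc i j k l h1 h2 h3 h4 h5)
    · have := main' i j k l h1 h2 h3 h4 h5
      clear main main' hcomm hnc
      grind
    · have := main i j k l h1 h2 h3 h4 h5
      clear main main' hcomm hnc
      grind
    · clear main main' hcomm hnc
      grind
  · exact Or.inr (Or.inl ⟨hr _, hr _⟩)
  · intro i j h; exact Or.inl h
  · intro i j h; exact h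

/-- The partner relation of the TL pattern attached to a noncrossing equivalence. -/
def PairRel (ℓ : ℕ) (R : ℕ → ℕ → Prop) (c d : ℕ) : Prop :=
  R c (d + 1) ∧ ((c ≤ d ∧ ∀ k, c < k → k ≤ d → ¬ R c k) ∨
    (d < c ∧ ∀ k, 1 ≤ k → k ≤ ℓ + 1 → R c k → d + 1 ≤ k ∧ k ≤ c))

lemma exists_least (p : ℕ → Prop) (n : ℕ) (h : p n) : ∃ m ≤ n, p m ∧ ∀ k < m, ¬ p k := by
  classical
  have hex : ∃ n, p n := ⟨n, h⟩
  exact ⟨Nat.find hex, Nat.find_le h, Nat.find_spec hex, fun k hk => Nat.find_min hex hk⟩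

lemma exists_greatest (p : ℕ → Prop) (N n : ℕ) (hn : n ≤ N) (h : p n) :
    ∃ m, n ≤ m ∧ m ≤ N ∧ p m ∧ ∀ k, m < k → k ≤ N → ¬ p k := by
  obtain ⟨m, hm, ⟨hp, hmN⟩, hmin⟩ := exists_least (fun z => p (N - z) ∧ z ≤ N) (N - n)
    ⟨by rwa [Nat.sub_sub_self hn], by omega⟩
  refine ⟨N - m, by omega, by omega, hp, ?_⟩
  intro k hk hkN hpk
  apply hmin (N - k) (by omega)
  exact ⟨by rwa [Nat.sub_sub_self hkN], by omega⟩

lemma tl_of_rel {ℓ : ℕ} {E : Finset ℕ} (hEm : ∀ c ∈ E, 1 ≤ c ∧ c ≤ ℓ)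
    {Z : Finset ℕ}
    (hZ : Z = insert 1 (E.biUnion (fun m => ({2 * m, 2 * m + 1} : Finset ℕ))))
    (R : ℕ → ℕ → Prop) (hr : ∀ i, R i i) (hs : ∀ i j, R i j → R j i)
    (ht : ∀ i j k, R i j → R j k → R i k)
    (hnc : ∀ i j k l, i < j → j < k → k < l → R i k → R j l → R i j)
    (h3 : ∀ i, 1 ≤ i → i ≤ ℓ → i ∉ E → R i (i + 1)) :
    ∃ σ, IsTLPattern Z σ ∧
      (∀ i ∈ E, ∀ j ∈ Finset.Icc 1 (ℓ + 1), i < j → R i j →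
        ∃ d ∈ E, i ≤ d ∧ d + 1 ≤ j ∧ ({2 * i, 2 * d + 1} : Finset ℕ) ∈ σ) ∧
      (∀ c ∈ E, ∀ d ∈ E, c ≤ d → ({2 * c, 2 * d + 1} : Finset ℕ) ∈ σ → R c (d + 1)) := by
  classical
  have hZm : ∀ z, z ∈ Z ↔ z = 1 ∨ ∃ m ∈ E, z = 2 * m ∨ z = 2 * m + 1 := by
    intro z; rw [hZ]; simp
  let D : Finset ℕ := insert 0 E
  have hD : ∀ d ∈ D, d ≤ ℓ := by
    intro d hd
    rcases Finset.mem_insert.1 hd with rfl | h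
    · omega
    · exact (hEm d h).2
  have hDE : ∀ d ∈ D, 1 ≤ d → d ∈ E := by
    intro d hd h
    rcases Finset.mem_insert.1 hd with rfl | h
    · omega
    · exact h
  have hDZ : ∀ d, 2 * d + 1 ∈ Z ↔ d ∈ D := by
    intro d
    rw [hZm]
    simp only [D, Finset.mem_insert]
    constructor
    · rintro (h | ⟨m, hm, h | h⟩)
      · left; omega
      · omega
      · right
        have : d = m := by omega
        rwa [this]
    · rintro (rfl | h)
      · left; rfl
      · right; exact ⟨d, h, Or.inr rfl⟩
  have hEZ : ∀ c, 2 * c ∈ Z ↔ c ∈ E := by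
    intro d
    rw [hZm]
    constructor
    · rintro (h | ⟨m, hm, h | h⟩)
      · omega
      · have : d = m := by omega
        rwa [this]
      · omega
    · intro h
      right; exact ⟨d, h, Or.inl rfl⟩
  let M : ℕ → Finset ℕ := fun d =>
    insert (2 * d + 1) ((E.filter (fun c => PairRel ℓ R c d)).image (fun c => 2 * c))
  have hMo : ∀ d d', 2 * d' + 1 ∈ M d ↔ d' = d := by
    intro d d'
    simp only [M, Finset.mem_insert, Finset.mem_image, Finset.mem_filter]
    constructor
    · rintro (h | ⟨c, -, h⟩) <;> omega
    · rintro rfl; left; rfl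
  have hMe : ∀ d c, 2 * c ∈ M d ↔ c ∈ E ∧ PairRel ℓ R c d := by
    intro d c
    simp only [M, Finset.mem_insert, Finset.mem_image, Finset.mem_filter]
    constructor
    · rintro (h | ⟨c', h, h'⟩)
      · omega
      · have : c = c' := by omega
        rwa [this]
    · intro h; right; exact ⟨c, h, rfl⟩
  have hMz : ∀ d, ∀ z ∈ M d, z = 2 * d + 1 ∨ ∃ c ∈ E, z = 2 * c ∧ PairRel ℓ R c d := by
    intro d z hz
    simp only [M, Finset.mem_insert, Finset.mem_image, Finset.mem_filter] at hz
    rcases hz with h | ⟨c, ⟨h1, h2⟩, rfl⟩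
    · exact Or.inl h
    · exact Or.inr ⟨c, h1, rfl, h2⟩
  -- uniqueness of the partners
  have huc : ∀ c ∈ E, ∀ c' ∈ E, ∀ d ∈ D, PairRel ℓ R c d → PairRel ℓ R c' d → c = c' := by
    rintro c hc c' hc' d hd ⟨h1, h2⟩ ⟨h1', h2'⟩
    have hcc : R c c' := ht _ _ _ h1 (hs _ _ h1')
    have hcc' := hs _ _ hcc
    have := hEm c hc
    have := hEm c' hc'
    rcases h2 with ⟨h2, h2a⟩ | ⟨h2, h2a⟩ <;> rcases h2' with ⟨h2', h2b⟩ | ⟨h2', h2b⟩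
    · by_contra hne
      rcases Nat.lt_or_gt_of_ne hne with h | h
      · exact h2a c' h h2' hcc
      · exact h2b c h h2 hcc'
    · have := h2b c (by omega) (by omega) hcc'
      omega
    · have := h2a c' (by omega) (by omega) hcc
      omega
    · have := h2a c' (by omega) (by omega) hcc
      have := h2b c (by omega) (by omega) hcc'
      omega
  have hud : ∀ c ∈ E, ∀ d ∈ D, ∀ d' ∈ D, PairRel ℓ R c d → PairRel ℓ R c d' → d = d' := by
    rintro c hc d hd d' hd' ⟨h1, h2⟩ ⟨h1', h2'⟩
    have := hEm c hc
    have := hD d hd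
    have := hD d' hd'
    rcases h2 with ⟨h2, h2a⟩ | ⟨h2, h2a⟩ <;> rcases h2' with ⟨h2', h2b⟩ | ⟨h2', h2b⟩
    · by_contra hne
      rcases Nat.lt_or_gt_of_ne hne with h | h
      · exact h2b (d + 1) (by omega) (by omega) h1
      · exact h2a (d' + 1) (by omega) (by omega) h1'
    · have := h2b (d + 1) (by omega) (by omega) h1
      omega
    · have := h2a (d' + 1) (by omega) (by omega) h1'
      omega
    · have := h2a (d' + 1) (by omega) (by omega) h1'
      have := h2b (d + 1) (by omega) (by omega) h1
      omega
  -- next element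
  have hnext : ∀ c ∈ E, ∀ j, c < j → j ≤ ℓ + 1 → R c j →
      ∃ d ∈ E, c ≤ d ∧ d + 1 ≤ j ∧ PairRel ℓ R c d := by
    intro c hc j hcj hj hR
    have hc1 := hEm c hc
    obtain ⟨n, hnj, ⟨hcn, hRn⟩, hmin⟩ := exists_least (fun n => c < n ∧ R c n) j ⟨hcj, hR⟩
    obtain ⟨d, rfl⟩ : ∃ d, n = d + 1 := ⟨n - 1, by omega⟩
    refine ⟨d, ?_, by omega, hnj, hRn, Or.inl ⟨by omega, ?_⟩⟩
    · by_contra hdE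
      have hdc : d ≠ c := by rintro rfl; exact hdE hc
      have := h3 d (by omega) (by omega) hdE
      exact hmin d (by omega) ⟨by omega, ht _ _ _ hRn (hs _ _ this)⟩
    · intro k hk hk' hRk
      exact hmin k (by omega) ⟨hk, hRk⟩
  -- the least element of a class starts a run
  have hfirst : ∀ c, 1 ≤ c → c ≤ ℓ + 1 → ∃ d ∈ D, d + 1 ≤ c ∧ R c (d + 1) ∧
      ∀ k, 1 ≤ k → R c k → d + 1 ≤ k := by
    intro c hc hcl
    obtain ⟨n, hnc, ⟨hn1, hRn⟩, hmin⟩ := exists_least (fun n => 1 ≤ n ∧ R c n) c ⟨hc, hr c⟩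
    obtain ⟨d, rfl⟩ : ∃ d, n = d + 1 := ⟨n - 1, by omega⟩
    refine ⟨d, ?_, hnc, hRn, ?_⟩
    · rw [Finset.mem_insert]
      by_cases hd0 : d = 0
      · exact Or.inl hd0
      · right
        by_contra hdE
        have := h3 d (by omega) (by omega) hdE
        exact hmin d (by omega) ⟨by omega, ht _ _ _ hRn (hs _ _ this)⟩
    · intro k hk hRk
      by_contra hlt
      exact hmin k (by omega) ⟨hk, hRk⟩
  have hexd : ∀ c ∈ E, ∃ d ∈ D, PairRel ℓ R c d := by
    intro c hc
    have hc1 := hEm c hc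
    by_cases h : ∃ j, c < j ∧ j ≤ ℓ + 1 ∧ R c j
    · obtain ⟨j, h1, h2, h3⟩ := h
      obtain ⟨d, hd, -, -, hP⟩ := hnext c hc j h1 h2 h3
      exact ⟨d, Finset.mem_insert_of_mem hd, hP⟩
    · push Not at h
      obtain ⟨d, hd, hdc, hR, hmin⟩ := hfirst c hc1.1 (by omega)
      refine ⟨d, hd, hR, Or.inr ⟨by omega, ?_⟩⟩
      intro k hk hk' hRk
      refine ⟨hmin k hk hRk, ?_⟩
      by_contra hlt
      exact h k (by omega) hk' hRk
  obtain ⟨d0, hd0, hd0l, hd0R, hd0min⟩ := hfirst (ℓ + 1) (by omega) le_rfl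
  have hexc : ∀ d ∈ D, d ≠ d0 → ∃ c ∈ E, PairRel ℓ R c d := by
    intro d hd hne
    have hdl := hD d hd
    by_cases h : ∃ j, 1 ≤ j ∧ j ≤ d ∧ R (d + 1) j
    · obtain ⟨j, hj1, hjd, hRj⟩ := h
      obtain ⟨c, hjc, hcd, hRc, hmax⟩ := exists_greatest (fun z => R (d + 1) z) d j hjd hRj
      refine ⟨c, ?_, hs _ _ hRc, Or.inl ⟨hcd, ?_⟩⟩
      · by_cases hcd' : c = d
        · rw [hcd']; exact hDE d hd (by omega)
        · by_contra hcE
          have := h3 c (by omega) (by omega) hcE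
          exact hmax (c + 1) (by omega) (by omega) (ht _ _ _ hRc this)
      · intro k hk hk' hRk
        exact hmax k hk hk' (ht _ _ _ hRc hRk)
    · push Not at h
      obtain ⟨c, hjc, hcd, hRc, hmax⟩ := exists_greatest (fun z => R (d + 1) z) (ℓ + 1) (d + 1)
        (by omega) (hr _)
      have hcl : c ≠ ℓ + 1 := by
        rintro rfl
        have e1 := hd0min (d + 1) (by omega) (hs _ _ hRc)
        exact h (d0 + 1) (by omega) (by omega) (ht _ _ _ hRc hd0R)
      refine ⟨c, ?_, hs _ _ hRc, Or.inr ⟨by omega, ?_⟩⟩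
      · by_contra hcE
        have := h3 c (by omega) (by omega) hcE
        exact hmax (c + 1) (by omega) (by omega) (ht _ _ _ hRc this)
      · intro k hk hk' hRk
        have hRk' := ht _ _ _ hRc hRk
        constructor
        · by_contra hlt
          exact h k hk (by omega) hRk'
        · by_contra hlt
          exact hmax k (by omega) hk' hRk'
  have hM2 : ∀ c ∈ E, ∀ d ∈ D, PairRel ℓ R c d → M d = {2 * c, 2 * d + 1} := by
    intro c hc d hd hP
    ext z
    simp only [Finset.mem_insert, Finset.mem_singleton]
    constructor
    · intro hz
      rcases hMz d z hz with h | ⟨c', hc', rfl, hP'⟩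
      · exact Or.inr h
      · left; rw [huc c hc c' hc' d hd hP hP']
    · rintro (rfl | rfl)
      · exact (hMe d c).2 ⟨hc, hP⟩
      · exact (hMo d d).2 rfl
  have hM0 : M d0 = {2 * d0 + 1} := by
    ext z
    simp only [Finset.mem_singleton]
    constructor
    · intro hz
      rcases hMz d0 z hz with h | ⟨c, hc, rfl, hR, h⟩
      · exact h
      · exfalso
        have hc1 := hEm c hc
        have hRl : R (ℓ + 1) c := ht _ _ _ hd0R (hs _ _ hR)
        have := hd0min c hc1.1 hRl
        rcases h with ⟨h, -⟩ | ⟨-, h⟩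
        · omega
        · have := h (ℓ + 1) (by omega) le_rfl (hs _ _ hRl)
          omega
    · rintro rfl
      exact (hMo d0 d0).2 rfl
  let σ : Finset (Finset ℕ) := D.image M
  have hσm : ∀ S ∈ σ, ∃ d ∈ D, S = M d := by
    intro S hS
    obtain ⟨d, hd, rfl⟩ := Finset.mem_image.1 hS
    exact ⟨d, hd, rfl⟩
  have hpart : IsPartitionOf Z σ := by
    refine ⟨?_, ?_, ?_⟩
    · intro S hS
      obtain ⟨d, hd, rfl⟩ := hσm S hS
      exact ⟨_, (hMo d d).2 rfl⟩
    · intro S hS z hz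
      obtain ⟨d, hd, rfl⟩ := hσm S hS
      rcases hMz d z hz with rfl | ⟨c, hc, rfl, -⟩
      · exact (hDZ d).2 hd
      · exact (hEZ c).2 hc
    · intro z hz
      rcases Nat.even_or_odd' z with ⟨c, rfl | rfl⟩
      · have hc := (hEZ c).1 hz
        obtain ⟨d, hd, hP⟩ := hexd c hc
        refine ⟨M d, ⟨Finset.mem_image_of_mem _ hd, (hMe d c).2 ⟨hc, hP⟩⟩, ?_⟩
        rintro S ⟨hS, hzS⟩
        obtain ⟨d', hd', rfl⟩ := hσm S hS
        rw [hud c hc d hd d' hd' hP ((hMe d' c).1 hzS).2]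
      · have hd := (hDZ c).1 hz
        refine ⟨M c, ⟨Finset.mem_image_of_mem _ hd, (hMo c c).2 rfl⟩, ?_⟩
        rintro S ⟨hS, hzS⟩
        obtain ⟨d', hd', rfl⟩ := hσm S hS
        rw [(hMo d' c).1 hzS]
  refine ⟨σ, ⟨hpart, nc_intro hpart ?_, M d0, Finset.mem_image_of_mem _ hd0, 2 * d0 + 1,
    ⟨d0, rfl⟩, hM0, ?_⟩, ?_, ?_⟩
  · intro S hS S' hS' hne a ha b hb a' ha' b' hb' h1 h2 h4
    obtain ⟨d, hd, rfl⟩ := hσm S hS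
    obtain ⟨d', hd', rfl⟩ := hσm S' hS'
    have hdd : d ≠ d' := by rintro rfl; exact hne rfl
    have hdl := hD d hd
    have hdl' := hD d' hd'
    rcases hMz d a ha with rfl | ⟨c, hc, rfl, hP⟩ <;>
      rcases hMz d b hb with rfl | ⟨c2, hc2, rfl, hP2⟩
    · omega
    · rcases hMz d' a' ha' with rfl | ⟨c', hc', rfl, hP'⟩ <;>
        rcases hMz d' b' hb' with rfl | ⟨c2', hc2', rfl, hP2'⟩
      · omega
      · obtain ⟨u1, u2⟩ := hP2
        obtain ⟨v1, v2⟩ := hP2'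
        have u2 := u2.resolve_left (by omega)
        have v2 := v2.resolve_left (by omega)
        have hcc : R c2' c2 := by
          by_cases he : d' + 1 = c2
          · rw [← he]; exact v1
          · have := hnc (d + 1) (d' + 1) c2 c2' (by omega) (by omega) (by omega) (hs _ _ u1)
              (hs _ _ v1)
            exact ht _ _ _ v1 (ht _ _ _ (hs _ _ this) (hs _ _ u1))
        have := v2.2 (d + 1) (by omega) (by omega) (ht _ _ _ hcc u1)
        omega
      · obtain ⟨u1, u2⟩ := hP2
        obtain ⟨v1, v2⟩ := hP'
        have u2 := u2.resolve_left (by omega)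
        have v2 := v2.resolve_right (by omega)
        have hcc : R c' c2 := by
          by_cases he : d + 1 = c'
          · rw [← he]; exact hs _ _ u1
          · have := hnc (d + 1) c' c2 (d' + 1) (by omega) (by omega) (by omega) (hs _ _ u1) v1
            exact ht _ _ _ (hs _ _ this) (hs _ _ u1)
        exact v2.2 c2 (by omega) (by omega) hcc
      · have := huc c' hc' c2' hc2' d' hd' hP' hP2'
        omega
    · rcases hMz d' a' ha' with rfl | ⟨c', hc', rfl, hP'⟩ <;>
        rcases hMz d' b' hb' with rfl | ⟨c2', hc2', rfl, hP2'⟩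
      · omega
      · obtain ⟨u1, u2⟩ := hP
        obtain ⟨v1, v2⟩ := hP2'
        have u2 := u2.resolve_right (by omega)
        have v2 := v2.resolve_left (by omega)
        have hcc : R c (d' + 1) := by
          by_cases he : d + 1 = c2'
          · rw [← he] at v1; exact ht _ _ _ u1 v1
          · exact hnc c (d' + 1) (d + 1) c2' (by omega) (by omega) (by omega) u1 (hs _ _ v1)
        exact u2.2 (d' + 1) (by omega) (by omega) hcc
      · obtain ⟨u1, u2⟩ := hP
        obtain ⟨v1, v2⟩ := hP'
        have u2 := u2.resolve_right (by omega)
        exact u2.2 c' (by omega) (by omega)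
          (hnc c c' (d + 1) (d' + 1) (by omega) (by omega) (by omega) u1 v1)
      · have := huc c' hc' c2' hc2' d' hd' hP' hP2'
        omega
    · have := huc c hc c2 hc2 d hd hP hP2
      omega
  · intro S hS hne
    obtain ⟨d, hd, rfl⟩ := hσm S hS
    have hdd : d ≠ d0 := by rintro rfl; exact hne rfl
    obtain ⟨c, hc, hP⟩ := hexc d hd hdd
    have hMd := hM2 c hc d hd hP
    have hc1 := hEm c hc
    have hdl := hD d hd
    obtain ⟨u1, ⟨u2, u3⟩ | ⟨u2, u3⟩⟩ := hP
    · refine ⟨2 * c, 2 * d + 1, by omega, hMd, ?_⟩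
      by_contra hcon
      have hRc : R c (d0 + 1) := by
        by_cases he : d = ℓ
        · subst he
          exact ht _ _ _ u1 hd0R
        · exact hnc c (d0 + 1) (d + 1) (ℓ + 1) (by omega) (by omega) (by omega) u1 (hs _ _ hd0R)
      have := hd0min c hc1.1 (ht _ _ _ hd0R (hs _ _ hRc))
      omega
    · refine ⟨2 * d + 1, 2 * c, by omega, by rw [hMd, Finset.pair_comm], ?_⟩
      by_contra hcon
      have hRc : R (d + 1) (d0 + 1) := by
        by_cases he : d0 + 1 = c
        · rw [he]; exact hs _ _ u1
        · exact hnc (d + 1) (d0 + 1) c (ℓ + 1) (by omega) (by omega) (by omega) (hs _ _ u1)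
            (hs _ _ hd0R)
      have := hd0min (d + 1) (by omega) (ht _ _ _ hd0R (hs _ _ hRc))
      omega
  · intro i hi j hj hij hR
    rw [Finset.mem_Icc] at hj
    obtain ⟨d, hd, h1, h2, hP⟩ := hnext i hi j hij hj.2 hR
    refine ⟨d, hd, h1, h2, ?_⟩
    have hdD : d ∈ D := Finset.mem_insert_of_mem hd
    rw [← hM2 i hi d hdD hP]
    exact Finset.mem_image_of_mem _ hdD
  · intro c hc d hd hcd hS
    obtain ⟨d', hd', he⟩ := hσm _ hS
    have e1 : 2 * d + 1 ∈ M d' := by rw [← he]; simp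
    have e2 : 2 * c ∈ M d' := by rw [← he]; simp
    rw [(hMo d' d).1 e1]
    exact ((hMe d' c).1 e2).2.1

lemma join_rel {ℓ : ℕ} {x r : ℕ → ℕ}
    (hx : ∀ i ∈ Finset.Icc 1 ℓ, ∀ j ∈ Finset.Icc 1 ℓ, i < j → x j < x i)
    (hxpos : ∀ i ∈ Finset.Icc 1 ℓ, 0 < x i)
    {E : Finset ℕ}
    (hE : E = (Finset.Icc 1 ℓ).filter (fun m => Even (∑ j ∈ Finset.Icc 1 m, r j)))
    {P : Finset (Finset ℕ)} (hP : IsNCP (Blam ℓ x) P) (n : ℕ) (hn : n ≤ ℓ) :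
    ∃ R : ℕ → ℕ → Prop, (∀ i, R i i) ∧ (∀ i j, R i j → R j i) ∧
      (∀ i j k, R i j → R j k → R i k) ∧
      (∀ i j k l, i < j → j < k → k < l → R i k → R j l → R i j) ∧
      (∀ L ∈ P, ∀ i ∈ Finset.Icc 1 (ℓ + 1), ∀ j ∈ Finset.Icc 1 (ℓ + 1),
        yy ℓ x i ∈ L → yy ℓ x j ∈ L → R i j) ∧
      (∀ i j, R i j → tgen ℓ i + tgen ℓ j ∈ ncpSubgroup ℓ x P ⊔ Ksub ℓ r) ∧
      (∀ i, 1 ≤ i → i ≤ n → i ∉ E → R i (i + 1)) := by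
  induction n with
  | zero =>
    refine ⟨fun i j => i = j ∨ (i ∈ Finset.Icc 1 (ℓ + 1) ∧ j ∈ Finset.Icc 1 (ℓ + 1) ∧
      ∃ L ∈ P, yy ℓ x i ∈ L ∧ yy ℓ x j ∈ L), ?_, ?_, ?_, ?_, ?_, ?_, ?_⟩
    · intro i; exact Or.inl rfl
    · rintro i j (rfl | ⟨hi, hj, L, hL, h1, h2⟩)
      · exact Or.inl rfl
      · exact Or.inr ⟨hj, hi, L, hL, h2, h1⟩
    · rintro i j k (rfl | ⟨hi, hj, L, hL, h1, h2⟩) h'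
      · exact h'
      · rcases h' with rfl | ⟨hj', hk, L', hL', h1', h2'⟩
        · exact Or.inr ⟨hi, hj, L, hL, h1, h2⟩
        · have := part_disj hP.1 hL hL' h2 h1'
          subst this
          exact Or.inr ⟨hi, hk, L, hL, h1, h2'⟩
    · rintro i j k l hij hjk hkl (rfl | ⟨hi, hk, L, hL, h1, h2⟩) h'
      · omega
      · rcases h' with rfl | ⟨hj, hl, L', hL', h1', h2'⟩
        · omega
        · by_cases hne : L = L'
          · subst hne
            exact Or.inr ⟨hi, hj, L, hL, h1, h1'⟩
          · exfalso
            rw [Finset.mem_Icc] at hi hj hk hl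
            exact nc_elim hP.2 hL' hL (Ne.symm hne) h2' h1' h2 h1
              (yy_anti hx hxpos hk.1 hkl hl.2) (yy_anti hx hxpos hj.1 hjk hk.2)
              (yy_anti hx hxpos hi.1 hij hj.2)
    · intro L hL i hi j hj h1 h2
      exact Or.inr ⟨hi, hj, L, hL, h1, h2⟩
    · rintro i j (rfl | ⟨hi, hj, L, hL, h1, h2⟩)
      · rw [add_self_A]; exact AddSubgroup.zero_mem _
      · exact AddSubgroup.mem_sup_left (ncp_rel hxpos hL hi hj h1 h2)
    · intro i h1 h2; omega
  | succ n ih =>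
    obtain ⟨R, hr, hs, ht, hnc, h1, h2, h3⟩ := ih (by omega)
    by_cases hnE : n + 1 ∈ E
    · refine ⟨R, hr, hs, ht, hnc, h1, h2, ?_⟩
      intro i hi hin hiE
      have : i ≠ n + 1 := by rintro rfl; exact hiE hnE
      exact h3 i hi (by omega) hiE
    · obtain ⟨R', hr', hs', ht', hnc', hm, hsub, hsup⟩ := merge_nc R hr hs ht hnc (n + 1)
      have hK : tgen ℓ (n + 1) + tgen ℓ (n + 1 + 1) ∈ ncpSubgroup ℓ x P ⊔ Ksub ℓ r :=
        AddSubgroup.mem_sup_right (K_step hE (by omega) hn hnE)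
      refine ⟨R', hr', hs', ht', hnc', ?_, ?_, ?_⟩
      · intro L hL i hi j hj hiL hjL
        exact hsub _ _ (h1 L hL i hi j hj hiL hjL)
      · intro i j h
        rcases hsup i j h with h | ⟨h, h'⟩ | ⟨h, h'⟩
        · exact h2 i j h
        · exact rel_trans (rel_trans (h2 _ _ h) hK) (h2 _ _ h')
        · exact rel_trans (rel_trans (h2 _ _ h) (rel_symm hK)) (h2 _ _ h')
      · intro i hi hin hiE
        by_cases he : i = n + 1
        · subst he; exact hm
        · exact hsub _ _ (h3 i hi (by omega) hiE)

/-- Theorem 4.4 (combinatorial form): the images in `A/K` of the subgroups `A_𝓛`, `𝓛`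
ranging over even NCPs of `B_λ`, are exactly the Lusztig subgroups `H_σ`, `σ` ranging
over the Temperley–Lieb patterns of `Z`. -/
theorem stmt4 (ℓ : ℕ) (x r : ℕ → ℕ)
    (hx : ∀ i ∈ Finset.Icc 1 ℓ, ∀ j ∈ Finset.Icc 1 ℓ, i < j → x j < x i)
    (hxpos : ∀ i ∈ Finset.Icc 1 ℓ, 0 < x i)
    (hr : ∀ i ∈ Finset.Icc 1 ℓ, 0 < r i)
    (E : Finset ℕ)
    (hE : E = (Finset.Icc 1 ℓ).filter (fun m => Even (∑ j ∈ Finset.Icc 1 m, r j)))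
    (Z : Finset ℕ)
    (hZ : Z = insert 1 (E.biUnion (fun m => ({2 * m, 2 * m + 1} : Finset ℕ)))) :
    {S : AddSubgroup ((Fin ℓ → ZMod 2) ⧸ Ksub ℓ r) |
        ∃ P, IsEvenNCP ℓ x r P ∧
          S = AddSubgroup.map (QuotientAddGroup.mk' (Ksub ℓ r)) (ncpSubgroup ℓ x P)} =
    {S | ∃ σ, IsTLPattern Z σ ∧
          S = AddSubgroup.closure (QuotientAddGroup.mk' (Ksub ℓ r) '' tlGens ℓ E σ)} := by
  have hEm : ∀ c ∈ E, 1 ≤ c ∧ c ≤ ℓ := by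
    intro c hc
    rw [hE, Finset.mem_filter, Finset.mem_Icc] at hc
    exact hc.1
  ext S
  simp only [Set.mem_setOf_eq]
  constructor
  · rintro ⟨P, hP, rfl⟩
    obtain ⟨R, hrR, hs, ht, hnc, h1, h2, h3⟩ := join_rel hx hxpos hE hP.1 ℓ le_rfl
    obtain ⟨σ, hσ, h4, h5⟩ := tl_of_rel hEm hZ R hrR hs ht hnc h3
    refine ⟨σ, hσ, key_eq hE R P σ hs ht h1 (fun i _ j _ h => h2 i j h) ?_ h4 h5⟩
    intro i hi hiE
    rw [Finset.mem_Icc] at hi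
    exact h3 i hi.1 hi.2 hiE
  · rintro ⟨σ, hσ, rfl⟩
    obtain ⟨P, hP, h⟩ := ncp_of_tl hx hxpos hE hZ hσ
    exact ⟨P, hP, h.symm⟩
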